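/- For every m ∈ (0,1) there is a spongy set X ⊆ [0,1] (with respect to Lebesgue measure λ on ℝ) such that inf X = 0, sup X = 1, and λ(X) = m. Moreover X can be taken to be open or to be closed, and furthermore the construction can be arranged either so that the density of X fails to exist at both 0 and 1 (positive oscillation at 0 and 1), or so that the density of X exists at both 0 and 1 (zero oscillation at 0 and 1). -/

import Mathlib

open MeasureTheory Metric Set Filter Topology

/-- The density of a set `A` at a point `x`: the limit, as `ε → 0⁺`, of
`λ(A ∩ (x−ε, x+ε))/(2ε)` (here expressed via open balls). -/
def HasDensity (A : Set ℝ) (x : ℝ) (v : ℝ) : Prop :=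
  Tendsto (fun e : ℝ => (volume (A ∩ ball x e)).toReal / (volume (ball x e)).toReal)
    (𝓝[>] (0 : ℝ)) (𝓝 v)

/-- `S` is spongy: there is no point at which the density of `S` exists and lies strictly
between `0` and `1`, but there is a point at which the density of `S` does not exist. -/
def IsSpongy (S : Set ℝ) : Prop :=
  (∀ (x v : ℝ), 0 < v → v < 1 → ¬ HasDensity S x v) ∧
  (∃ x : ℝ, ¬ ∃ v : ℝ, HasDensity S x v)

/-- The basic requirements: `X ⊆ [0,1]`, measurable, spongy, `inf X = 0`, `sup X = 1`, and
`λ(X) = m`. -/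
def GoodSpongy (m : ℝ) (X : Set ℝ) : Prop :=
  X ⊆ Icc 0 1 ∧ MeasurableSet X ∧ IsSpongy X ∧
    sInf X = 0 ∧ sSup X = 1 ∧ volume X = ENNReal.ofReal m

/-!
The expanding map `zigzag` has slope `±10` wherever it takes a value in `[0, 1]`, so a set
invariant under it looks around `t` at scale `r / 10` as it does around `zigzag t` at scale `r`.
Let the set also contain `(-∞, 0)` and miss `(1, ∞)`. Around each frontier point it then looks, at
a sequence of scales, like it does around the points of the orbit, where it fills one of two
annuli or misses the other, so that no density `v` with `0 < v < 1` is possible. At the fixed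
point `1` the proportion filled recurs along the scales `10⁻ⁿ` and is strictly between `0` and
`1`, so there is no density.

Such a transition between empty and full, rescaled and continued by its mirror image, is a spongy
block of prescribed measure inside a prescribed interval, and another reflection, about `1 / 2`,
treats the endpoints `0` and `1` alike. A block starting at `0` has no density there. For a
density at `0`, the block is moved away from `0` and a set of density `0` accumulating at `0` is
added: the point `0` itself, or a sequence of blocks in intervals shrinking to `0`, of measures
small compared to the squares of their distances to `0`.
-/

section Density

variable {A B : Set ℝ} {f : ℝ → ℝ} {c r v x : ℝ}

/-- The proportion of the interval `(x - r, x + r)` occupied by `A`; its limit as `r → 0⁺` is the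
density of `A` at `x`. -/
noncomputable def densityRatio (A : Set ℝ) (x r : ℝ) : ℝ :=
  volume.real (A ∩ ball x r) / (2 * r)

/-- The local half of sponginess: if `A` has a density at `x`, it is not strictly between `0`
and `1`. -/
def NoIntermediateDensityAt (A : Set ℝ) (x : ℝ) : Prop :=
  ∀ v : ℝ, 0 < v → v < 1 → ¬ HasDensity A x v

lemma hasDensity_iff_tendsto_densityRatio :
    HasDensity A x v ↔ Tendsto (densityRatio A x) (𝓝[>] 0) (𝓝 v) := by
  refine tendsto_congr' ?_
  filter_upwards [self_mem_nhdsWithin] with r hr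
  rw [densityRatio, ← Real.volume_real_ball (le_of_lt hr)]
  rfl

lemma HasDensity.unique {w : ℝ} (hv : HasDensity A x v) (hw : HasDensity A x w) : v = w :=
  tendsto_nhds_unique hv hw

lemma hasDensity_congr (h : ∀ᶠ y in 𝓝 x, y ∈ A ↔ y ∈ B) : HasDensity A x v ↔ HasDensity B x v := by
  obtain ⟨δ, hδ, hball⟩ := Metric.eventually_nhds_iff_ball.1 h
  refine tendsto_congr' ?_
  filter_upwards [Ioo_mem_nhdsGT hδ] with r hr
  have : A ∩ ball x r = B ∩ ball x r := by
    ext y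
    exact and_congr_left fun hy => hball y (ball_subset_ball hr.2.le hy)
  rw [this]

lemma noIntermediateDensityAt_congr (h : ∀ᶠ y in 𝓝 x, y ∈ A ↔ y ∈ B) :
    NoIntermediateDensityAt A x ↔ NoIntermediateDensityAt B x := by
  simp only [NoIntermediateDensityAt, hasDensity_congr h]

lemma hasDensity_zero_of_volume_eq_zero (h : volume A = 0) (x : ℝ) : HasDensity A x 0 := by
  simp [HasDensity, measure_inter_null_of_null_left _ h]

lemma hasDensity_univ (x : ℝ) : HasDensity univ x 1 := by
  refine hasDensity_iff_tendsto_densityRatio.2 (tendsto_const_nhds.congr' ?_)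
  filter_upwards [self_mem_nhdsWithin] with r hr
  have hr : 0 < r := hr
  rw [densityRatio, univ_inter, Real.volume_real_ball hr.le, div_self (by positivity)]

lemma hasDensity_one_of_mem_interior (h : x ∈ interior A) : HasDensity A x 1 :=
  (hasDensity_congr (Eventually.mono (mem_interior_iff_mem_nhds.1 h) fun _ hy =>
    iff_of_true hy trivial)).2 (hasDensity_univ x)

lemma eventually_notMem_of_notMem_closure (h : x ∉ closure A) : ∀ᶠ y in 𝓝 x, y ∉ A :=
  not_frequently.1 (mt mem_closure_iff_frequently.2 h)

lemma hasDensity_zero_of_notMem_closure (h : x ∉ closure A) : HasDensity A x 0 :=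
  (hasDensity_congr ((eventually_notMem_of_notMem_closure h).mono fun _ hy => iff_of_false hy id)).2
    (hasDensity_zero_of_volume_eq_zero measure_empty x)

lemma mem_closure_of_not_hasDensity (h : ¬ ∃ v, HasDensity A x v) : x ∈ closure A :=
  not_imp_comm.1 (fun hx => ⟨0, hasDensity_zero_of_notMem_closure hx⟩) h

lemma HasDensity.noIntermediateDensityAt (h : HasDensity A x v) (hv : v = 0 ∨ v = 1) :
    NoIntermediateDensityAt A x := by
  intro w hw0 hw1 hw
  rcases hv with rfl | rfl
  · exact hw0.ne (h.unique hw)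
  · exact hw1.ne (hw.unique h)

lemma noIntermediateDensityAt_of_notMem_frontier (h : x ∉ frontier A) :
    NoIntermediateDensityAt A x := by
  by_cases hx : x ∈ interior A
  · exact (hasDensity_one_of_mem_interior hx).noIntermediateDensityAt (.inr rfl)
  · exact (hasDensity_zero_of_notMem_closure fun hx' => h ⟨hx', hx⟩).noIntermediateDensityAt
      (.inl rfl)

lemma eventually_mem_union_iff_left (h : x ∉ closure B) : ∀ᶠ y in 𝓝 x, y ∈ A ∪ B ↔ y ∈ A :=
  (eventually_notMem_of_notMem_closure h).mono fun _ hy => or_iff_left hy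

lemma eventually_mem_union_iff_right (h : x ∉ closure A) : ∀ᶠ y in 𝓝 x, y ∈ A ∪ B ↔ y ∈ B :=
  (eventually_notMem_of_notMem_closure h).mono fun _ hy => or_iff_right hy

lemma noIntermediateDensityAt_union (hA : NoIntermediateDensityAt A x)
    (hB : NoIntermediateDensityAt B x) (hAB : Disjoint (closure A) (closure B)) :
    NoIntermediateDensityAt (A ∪ B) x := by
  by_cases hx : x ∈ closure A
  · exact (noIntermediateDensityAt_congr
      (eventually_mem_union_iff_left (disjoint_left.1 hAB hx))).2 hA
  · exact (noIntermediateDensityAt_congr (eventually_mem_union_iff_right hx)).2 hB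

lemma volume_affine_preimage (hc : c ≠ 0) (d : ℝ) (A : Set ℝ) :
    volume ((fun y => c * y + d) ⁻¹' A) = ENNReal.ofReal |c⁻¹| * volume A := by
  have h : (fun y => c * y + d) ⁻¹' A = (c * ·) ⁻¹' ((· + d) ⁻¹' A) := rfl
  rw [h, Real.volume_preimage_mul_left hc, measure_preimage_add_right]

lemma preimage_inter_ball_of_affine (hc : c ≠ 0) (hf : ∀ y ∈ ball x r, f y = f x + c * (y - x)) :
    f ⁻¹' A ∩ ball x r = (fun y => c * y + (f x - c * x)) ⁻¹' (A ∩ ball (f x) (|c| * r)) := by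
  ext y
  have hball : c * y + (f x - c * x) ∈ ball (f x) (|c| * r) ↔ y ∈ ball x r := by
    rw [mem_ball, mem_ball, Real.dist_eq, Real.dist_eq,
      show c * y + (f x - c * x) - f x = c * (y - x) by ring, abs_mul,
      mul_lt_mul_iff_right₀ (abs_pos.2 hc)]
  rw [mem_preimage, mem_inter_iff, mem_inter_iff, hball, mem_preimage]
  refine and_congr_left fun hy => ?_
  rw [hf y hy, show f x + c * (y - x) = c * y + (f x - c * x) by ring]

lemma densityRatio_preimage_of_affine (hc : c ≠ 0)
    (hf : ∀ y ∈ ball x r, f y = f x + c * (y - x)) :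
    densityRatio (f ⁻¹' A) x r = densityRatio A (f x) (|c| * r) := by
  have hc' : |c| ≠ 0 := abs_ne_zero.2 hc
  rw [densityRatio, densityRatio, preimage_inter_ball_of_affine hc hf, measureReal_def,
    volume_affine_preimage hc, ENNReal.toReal_mul, ENNReal.toReal_ofReal (abs_nonneg _), abs_inv,
    measureReal_def]
  field_simp

lemma map_mul_left_nhdsGT_zero (hc : 0 < c) : map (c * ·) (𝓝[>] (0 : ℝ)) = 𝓝[>] 0 := by
  conv_lhs => rw [← comap_mulLeft_nhdsGT_zero hc]
  exact map_comap_of_surjective (mul_left_surjective₀ hc.ne') _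

lemma hasDensity_preimage_iff_of_affine (hc : c ≠ 0)
    (hf : ∀ᶠ y in 𝓝 x, f y = f x + c * (y - x)) :
    HasDensity (f ⁻¹' A) x v ↔ HasDensity A (f x) v := by
  obtain ⟨δ, hδ, hball⟩ := Metric.eventually_nhds_iff_ball.1 hf
  have hscale : Tendsto (densityRatio A (f x)) (𝓝[>] 0) (𝓝 v) ↔
      Tendsto (densityRatio A (f x) ∘ (|c| * ·)) (𝓝[>] 0) (𝓝 v) := by
    rw [← tendsto_map'_iff, map_mul_left_nhdsGT_zero (abs_pos.2 hc)]
  rw [hasDensity_iff_tendsto_densityRatio, hasDensity_iff_tendsto_densityRatio, hscale]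
  refine tendsto_congr' ?_
  filter_upwards [Ioo_mem_nhdsGT hδ] with r hr
  exact densityRatio_preimage_of_affine hc fun y hy => hball y (ball_subset_ball hr.2.le hy)

lemma noIntermediateDensityAt_preimage_iff_of_affine (hc : c ≠ 0)
    (hf : ∀ᶠ y in 𝓝 x, f y = f x + c * (y - x)) :
    NoIntermediateDensityAt (f ⁻¹' A) x ↔ NoIntermediateDensityAt A (f x) := by
  simp only [NoIntermediateDensityAt, hasDensity_preimage_iff_of_affine hc hf]

lemma hasDensity_zero_of_volume_inter_ball_le
    (h : ∀ r > 0, volume (A ∩ ball x r) ≤ ENNReal.ofReal (r ^ 2)) : HasDensity A x 0 := by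
  have hlim : Tendsto (fun r : ℝ => r / 2) (𝓝[>] 0) (𝓝 0) := by
    have h : Tendsto (fun r : ℝ => r / 2) (𝓝 0) (𝓝 (0 / 2)) := tendsto_id.div_const 2
    rw [zero_div] at h
    exact h.mono_left nhdsWithin_le_nhds
  refine hasDensity_iff_tendsto_densityRatio.2
    (tendsto_of_tendsto_of_tendsto_of_le_of_le' tendsto_const_nhds hlim ?_ ?_)
  all_goals filter_upwards [self_mem_nhdsWithin] with r (hr : 0 < r)
  · exact div_nonneg measureReal_nonneg (by positivity)
  · have hvol : volume.real (A ∩ ball x r) ≤ r ^ 2 :=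
      ENNReal.toReal_le_of_le_ofReal (by positivity) (h r hr)
    rw [densityRatio, div_le_iff₀ (by positivity)]
    linarith

end Density


section Fold

variable {A : Set ℝ} {c v x : ℝ}

/-- The map folding the line at `c`: the identity before `c` and the reflection about `c` after it.
Preimages under it are the symmetric sets produced from what `A` is before `c`. -/
def fold (c x : ℝ) : ℝ := min x (2 * c - x)

lemma continuous_fold (c : ℝ) : Continuous (fold c) := by
  unfold fold
  fun_prop

lemma fold_of_le (h : x ≤ c) : fold c x = x := min_eq_left (by linarith)

lemma fold_of_ge (h : c ≤ x) : fold c x = 2 * c - x := min_eq_right (by linarith)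

lemma fold_reflect (c x : ℝ) : fold c (2 * c - x) = fold c x := by
  rw [fold, fold, sub_sub_cancel, min_comm]

lemma preimage_fold_subset_Icc {a : ℝ} (h : A ⊆ Ici a) : fold c ⁻¹' A ⊆ Icc a (2 * c - a) := by
  intro x hx
  obtain ⟨hl, hr⟩ : a ≤ x ∧ a ≤ 2 * c - x := le_min_iff.1 (h hx)
  exact ⟨hl, by linarith⟩

lemma exists_fold_eventually_affine (hx : x ≠ c) :
    ∃ s : ℝ, s ≠ 0 ∧ ∀ᶠ y in 𝓝 x, fold c y = fold c x + s * (y - x) := by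
  rcases hx.lt_or_gt with hx | hx
  · refine ⟨1, one_ne_zero, (eventually_lt_nhds hx).mono fun y hy => ?_⟩
    rw [fold_of_le hx.le, fold_of_le hy.le]
    ring
  · refine ⟨-1, by norm_num, (eventually_gt_nhds hx).mono fun y hy => ?_⟩
    rw [fold_of_ge hx.le, fold_of_ge hy.le]
    ring

lemma hasDensity_preimage_fold_iff (hx : x ≠ c) :
    HasDensity (fold c ⁻¹' A) x v ↔ HasDensity A (fold c x) v :=
  let ⟨_, hs, hf⟩ := exists_fold_eventually_affine hx
  hasDensity_preimage_iff_of_affine hs hf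

lemma noIntermediateDensityAt_preimage_fold (hA : ∀ x, NoIntermediateDensityAt A x)
    (hc : c ∉ frontier A) (x : ℝ) : NoIntermediateDensityAt (fold c ⁻¹' A) x := by
  rcases eq_or_ne x c with rfl | hx
  · refine noIntermediateDensityAt_of_notMem_frontier fun h => hc ?_
    simpa only [mem_preimage, fold_of_le le_rfl] using
      (continuous_fold x).frontier_preimage_subset A h
  · obtain ⟨s, hs, hf⟩ := exists_fold_eventually_affine hx
    exact (noIntermediateDensityAt_preimage_iff_of_affine hs hf).2 (hA _)

lemma volume_preimage_fold (hA : MeasurableSet A) (c : ℝ) :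
    volume (fold c ⁻¹' A) = 2 * volume (A ∩ Iic c) := by
  have hsplit : fold c ⁻¹' A = (A ∩ Iic c) ∪ (fun x => 2 * c - x) ⁻¹' (A ∩ Iio c) := by
    ext x
    rcases le_or_gt x c with hx | hx
    · have hx' : ¬ 2 * c - x < c := by linarith
      simp only [mem_preimage, mem_union, mem_inter_iff, mem_Iic, mem_Iio, fold_of_le hx, hx, hx',
        and_true, and_false, or_false]
    · have hx' : 2 * c - x < c := by linarith
      simp only [mem_preimage, mem_union, mem_inter_iff, mem_Iic, mem_Iio, fold_of_ge hx.le,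
        hx.not_ge, hx', and_true, and_false, false_or]
  have hdisj : Disjoint (A ∩ Iic c) ((fun x => 2 * c - x) ⁻¹' (A ∩ Iio c)) :=
    disjoint_left.2 fun x hx hx' => by
      have h1 : x ≤ c := hx.2
      have h2 : 2 * c - x < c := hx'.2
      linarith
  have hreflect := (Measure.measurePreserving_sub_left volume (2 * c)).measure_preimage
    (hA.inter measurableSet_Iio).nullMeasurableSet (s := A ∩ Iio c)
  have hIio : volume (A ∩ Iio c) = volume (A ∩ Iic c) :=
    measure_congr ((ae_eq_refl A).inter Iio_ae_eq_Iic)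
  rw [hsplit, measure_union hdisj ((hA.inter measurableSet_Iio).preimage (by fun_prop)), hreflect,
    hIio, two_mul]

end Fold

section Zigzag

variable {t : ℝ}

/-- An expanding map with three branches of slope `±10`. It maps each of `[0, 1/10]`,
`[3/10, 4/10]` and `[9/10, 1]` onto `[0, 1]`; the first gap between them goes above `1` and the
second below `0`. -/
noncomputable def zigzag (t : ℝ) : ℝ := max (min (10 * t) (4 - 10 * t)) (10 * t - 9)

lemma continuous_zigzag : Continuous zigzag := by
  unfold zigzag
  fun_prop

lemma zigzag_one : zigzag 1 = 1 := by norm_num [zigzag]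

lemma zigzag_neg (ht : t < 0) : zigzag t < 0 :=
  max_lt (min_lt_of_left_lt (by linarith)) (by linarith)

lemma mapsTo_zigzag_Iio : MapsTo zigzag (Iio 0) (Iio 0) := fun _ => zigzag_neg

lemma zigzag_neg_of_mem_Ioo (ht : t ∈ Ioo (4 / 10) (9 / 10)) : zigzag t < 0 :=
  max_lt (min_lt_of_right_lt (by linarith [ht.1])) (by linarith [ht.2])

lemma one_lt_zigzag (ht : 1 < t) : 1 < zigzag t := lt_max_of_lt_right (by linarith)

lemma mapsTo_zigzag_Ioi : MapsTo zigzag (Ioi 1) (Ioi 1) := fun _ => one_lt_zigzag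

lemma one_lt_zigzag_of_mem_Ioo (ht : t ∈ Ioo (1 / 10) (3 / 10)) : 1 < zigzag t :=
  lt_max_of_lt_left (lt_min (by linarith [ht.1]) (by linarith [ht.2]))

lemma mem_branch_of_zigzag_mem_Icc (ht : zigzag t ∈ Icc 0 1) :
    t ∈ Icc 0 (1 / 10) ∪ Icc (3 / 10) (4 / 10) ∪ Icc (9 / 10) 1 := by
  have h0 : 0 ≤ t := not_lt.1 fun h => ht.1.not_gt (zigzag_neg h)
  have h1 : t ≤ 1 := not_lt.1 fun h => ht.2.not_gt (one_lt_zigzag h)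
  have hlow : t ∉ Ioo (1 / 10) (3 / 10) := fun h => ht.2.not_gt (one_lt_zigzag_of_mem_Ioo h)
  have hhigh : t ∉ Ioo (4 / 10) (9 / 10) := fun h => ht.1.not_gt (zigzag_neg_of_mem_Ioo h)
  grind

lemma exists_zigzag_affine_on_ball (ht : zigzag t ∈ Icc 0 1) :
    ∃ c : ℝ, |c| = 10 ∧ ∀ y ∈ ball t (1 / 10), zigzag y = zigzag t + c * (y - t) := by
  simp only [Real.ball_eq_Ioo]
  rcases mem_branch_of_zigzag_mem_Icc ht with (h | h) | h
  · exact ⟨10, by norm_num, fun y hy => by grind [zigzag]⟩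
  · exact ⟨-10, by norm_num, fun y hy => by grind [zigzag]⟩
  · exact ⟨10, by norm_num, fun y hy => by grind [zigzag]⟩

end Zigzag

/-- A set which is full before `0`, empty after `1` and, in between, self-similar under `zigzag`.
Membership of a point between `0` and `1` is decided by the side on which its orbit leaves
`[0, 1]`. -/
structure IsTransition (S : Set ℝ) : Prop where
  Iio_subset : Iio 0 ⊆ S
  subset_Iic : S ⊆ Iic 1
  preimage_zigzag : zigzag ⁻¹' S = S

/-- The open transition, of the points whose orbit under `zigzag` leaves `[0, 1]` downwards. -/
def openTransition : Set ℝ := ⋃ n, zigzag^[n] ⁻¹' Iio 0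

/-- The closed transition, of the points whose orbit under `zigzag` does not leave `[0, 1]`
upwards. -/
def closedTransition : Set ℝ := ⋂ n, zigzag^[n] ⁻¹' Iic 1

lemma isOpen_openTransition : IsOpen openTransition :=
  isOpen_iUnion fun n => isOpen_Iio.preimage (continuous_zigzag.iterate n)

lemma isClosed_closedTransition : IsClosed closedTransition :=
  isClosed_iInter fun n => isClosed_Iic.preimage (continuous_zigzag.iterate n)

lemma isTransition_openTransition : IsTransition openTransition where
  Iio_subset := subset_iUnion (fun n => zigzag^[n] ⁻¹' Iio 0) 0
  subset_Iic := iUnion_subset fun n t ht => not_lt.1 fun h1 => by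
    have h : 1 < zigzag^[n] t := mapsTo_zigzag_Ioi.iterate n (mem_Ioi.2 h1)
    exact (h.trans (ht.trans one_pos)).false
  preimage_zigzag := by
    ext t
    simp only [openTransition, mem_preimage, mem_iUnion, ← Function.iterate_succ_apply]
    refine ⟨fun ⟨n, hn⟩ => ⟨n + 1, hn⟩, fun ⟨n, hn⟩ => ⟨n, ?_⟩⟩
    rw [Function.iterate_succ_apply']
    exact zigzag_neg hn

lemma isTransition_closedTransition : IsTransition closedTransition where
  Iio_subset := subset_iInter fun n t ht => by
    have h : zigzag^[n] t < 0 := mapsTo_zigzag_Iio.iterate n ht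
    exact (h.trans one_pos).le
  subset_Iic := iInter_subset (fun n => zigzag^[n] ⁻¹' Iic 1) 0
  preimage_zigzag := by
    ext t
    simp only [closedTransition, mem_preimage, mem_iInter, ← Function.iterate_succ_apply]
    refine ⟨fun h n => ?_, fun h n => h (n + 1)⟩
    by_contra hn
    have := h n
    rw [Function.iterate_succ_apply'] at this
    exact this.not_gt (one_lt_zigzag (not_le.1 hn))

lemma measureReal_inter_ball_sdiff_ball (S : Set ℝ) (x : ℝ) {a b : ℝ} (ha : 0 < a) (hab : a ≤ b) :
    volume.real (S ∩ (ball x b \ ball x a)) =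
      2 * b * densityRatio S x b - 2 * a * densityRatio S x a := by
  have hinter : S ∩ ball x b ∩ ball x a = S ∩ ball x a := by
    rw [inter_assoc, inter_eq_right.2 (ball_subset_ball hab)]
  have h := measureReal_inter_add_sdiff (μ := volume) (s := S ∩ ball x b)
    (measurableSet_ball (x := x) (ε := a)) (measure_inter_lt_top_of_right_ne_top
      measure_ball_lt_top.ne).ne
  rw [hinter, inter_sdiff_assoc] at h
  have hb : 0 < b := ha.trans_le hab
  rw [densityRatio, densityRatio, mul_div_cancel₀ _ (by positivity),
    mul_div_cancel₀ _ (by positivity)]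
  linarith

lemma measureReal_ball_sdiff_ball (x : ℝ) {a b : ℝ} (ha : 0 ≤ a) (hab : a ≤ b) :
    volume.real (ball x b \ ball x a) = 2 * (b - a) := by
  rw [measureReal_sdiff (ball_subset_ball hab) measurableSet_ball, Real.volume_real_ball ha,
    Real.volume_real_ball (ha.trans hab), mul_sub]

namespace IsTransition

variable {S : Set ℝ} {t r v : ℝ}

lemma mem_of_zigzag_neg (hS : IsTransition S) (h : zigzag t < 0) : t ∈ S := by
  rw [← hS.preimage_zigzag]
  exact hS.Iio_subset h

lemma notMem_of_one_lt_zigzag (hS : IsTransition S) (h : 1 < zigzag t) : t ∉ S := by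
  rw [← hS.preimage_zigzag]
  exact fun ht => (hS.subset_Iic ht).not_gt h

lemma frontier_subset_Icc (hS : IsTransition S) : frontier S ⊆ Icc 0 1 := fun _ ht =>
  ⟨not_lt.1 fun h => ht.2 (interior_mono hS.Iio_subset (isOpen_Iio.interior_eq.ge h)),
    closure_minimal hS.subset_Iic isClosed_Iic ht.1⟩

lemma mapsTo_zigzag_frontier (hS : IsTransition S) : MapsTo zigzag (frontier S) (frontier S) := by
  have h := continuous_zigzag.frontier_preimage_subset S
  rwa [hS.preimage_zigzag] at h

lemma densityRatio_zigzag (hS : IsTransition S) (ht : zigzag t ∈ Icc 0 1) (hr : r ≤ 1) :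
    densityRatio S (zigzag t) r = densityRatio S t (r / 10) := by
  obtain ⟨c, hc, haff⟩ := exists_zigzag_affine_on_ball ht
  have hc0 : c ≠ 0 := abs_pos.1 (by rw [hc]; norm_num)
  have h := densityRatio_preimage_of_affine (A := S) hc0 fun y hy =>
    haff y (ball_subset_ball (by linarith : r / 10 ≤ 1 / 10) hy)
  rwa [hS.preimage_zigzag, hc, mul_div_cancel₀ _ (by norm_num), eq_comm] at h

lemma densityRatio_zigzag_iterate (hS : IsTransition S) (ht : ∀ n, zigzag^[n] t ∈ Icc 0 1)
    (hr : r ≤ 1) (n : ℕ) : densityRatio S (zigzag^[n] t) r = densityRatio S t (r / 10 ^ n) := by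
  induction n generalizing r with
  | zero => simp
  | succ n ih =>
    have hmem := ht (n + 1)
    rw [Function.iterate_succ_apply'] at hmem ⊢
    rw [hS.densityRatio_zigzag hmem hr, ih (by linarith), pow_succ', div_div]

lemma tendsto_densityRatio_zigzag_iterate (hS : IsTransition S)
    (ht : ∀ n, zigzag^[n] t ∈ Icc 0 1) (hv : HasDensity S t v) (hr0 : 0 < r) (hr1 : r ≤ 1) :
    Tendsto (fun n => densityRatio S (zigzag^[n] t) r) atTop (𝓝 v) := by
  have hscale : Tendsto (fun n : ℕ => r / 10 ^ n) atTop (𝓝[>] 0) :=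
    tendsto_nhdsWithin_iff.2 ⟨tendsto_const_nhds.div_atTop
      (tendsto_pow_atTop_atTop_of_one_lt (by norm_num)), .of_forall fun n => by
        rw [mem_Ioi]
        positivity⟩
  simpa only [hS.densityRatio_zigzag_iterate ht hr1, Function.comp_def] using
    (hasDensity_iff_tendsto_densityRatio.1 hv).comp hscale

lemma tendsto_measureReal_inter_ball_sdiff_ball (hS : IsTransition S)
    (ht : ∀ n, zigzag^[n] t ∈ Icc 0 1) (hv : HasDensity S t v) {a b : ℝ} (ha : 0 < a)
    (hab : a ≤ b) (hb : b ≤ 1) :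
    Tendsto (fun n => volume.real (S ∩ (ball (zigzag^[n] t) b \ ball (zigzag^[n] t) a))) atTop
      (𝓝 (2 * (b - a) * v)) := by
  simp only [measureReal_inter_ball_sdiff_ball S _ ha hab, mul_sub, sub_mul]
  exact ((hS.tendsto_densityRatio_zigzag_iterate ht hv (ha.trans_le hab) hb).const_mul (2 * b)).sub
    ((hS.tendsto_densityRatio_zigzag_iterate ht hv ha (hab.trans hb)).const_mul (2 * a))

lemma ball_sdiff_ball_subset (hS : IsTransition S)
    (ht : t ∈ Icc 0 (1 / 10) ∪ Icc (3 / 10) (4 / 10)) : ball t (1 / 2) \ ball t (9 / 20) ⊆ S := by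
  intro y hy
  rw [Real.ball_eq_Ioo, Real.ball_eq_Ioo] at hy
  have hy : y < 0 ∨ y ∈ Ioo (4 / 10) (9 / 10) := by grind
  exact hS.mem_of_zigzag_neg (hy.elim zigzag_neg zigzag_neg_of_mem_Ioo)

lemma disjoint_ball_sdiff_ball (hS : IsTransition S) (ht : t ∈ Icc (9 / 10) 1) :
    Disjoint S (ball t (4 / 5) \ ball t (3 / 4)) := by
  refine disjoint_right.2 fun y hy => ?_
  rw [Real.ball_eq_Ioo, Real.ball_eq_Ioo] at hy
  have hy : 1 < y ∨ y ∈ Ioo (1 / 10) (3 / 10) := by grind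
  exact hS.notMem_of_one_lt_zigzag (hy.elim one_lt_zigzag one_lt_zigzag_of_mem_Ioo)

lemma noIntermediateDensityAt (hS : IsTransition S) (t : ℝ) : NoIntermediateDensityAt S t := by
  by_cases ht : t ∉ frontier S
  · exact noIntermediateDensityAt_of_notMem_frontier ht
  rw [not_not] at ht
  have horbit (n : ℕ) : zigzag^[n] t ∈ Icc 0 1 :=
    hS.frontier_subset_Icc (hS.mapsTo_zigzag_frontier.iterate n ht)
  intro v hv0 hv1 hv
  -- Along the orbit, density `v` makes both annuli filled in proportion `v` in the limit, but at
  -- each point either the inner one is full or the outer one is empty.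
  have hinner : ∀ᶠ n in atTop,
      volume.real (S ∩ (ball (zigzag^[n] t) (1 / 2) \ ball (zigzag^[n] t) (9 / 20))) < 1 / 10 :=
    (hS.tendsto_measureReal_inter_ball_sdiff_ball horbit hv (by norm_num) (by norm_num)
      (by norm_num)).eventually_lt_const (by linarith)
  have houter : ∀ᶠ n in atTop,
      0 < volume.real (S ∩ (ball (zigzag^[n] t) (4 / 5) \ ball (zigzag^[n] t) (3 / 4))) :=
    (hS.tendsto_measureReal_inter_ball_sdiff_ball horbit hv (by norm_num) (by norm_num)
      (by norm_num)).eventually_const_lt (by linarith)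
  obtain ⟨n, hn_inner, hn_outer⟩ := (hinner.and houter).exists
  have hnext := horbit (n + 1)
  rw [Function.iterate_succ_apply'] at hnext
  rcases mem_branch_of_zigzag_mem_Icc hnext with h | h
  · rw [inter_eq_right.2 (hS.ball_sdiff_ball_subset h),
      measureReal_ball_sdiff_ball _ (by norm_num) (by norm_num)] at hn_inner
    norm_num at hn_inner
  · rw [(hS.disjoint_ball_sdiff_ball h).inter_eq, measureReal_empty] at hn_outer
    exact hn_outer.false

lemma densityRatio_one_one_mem_Icc (hS : IsTransition S) :
    densityRatio S 1 1 ∈ Icc (1 / 4) (1 / 2) := by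
  have hlower : Ioo (4 / 10) (9 / 10) ⊆ S ∩ ball 1 1 := fun y hy => by
    refine ⟨hS.mem_of_zigzag_neg (zigzag_neg_of_mem_Ioo hy), ?_⟩
    rw [Real.ball_eq_Ioo]
    constructor <;> linarith [hy.1, hy.2]
  have hupper : S ∩ ball 1 1 ⊆ Ioc 0 1 := fun y hy => by
    rw [Real.ball_eq_Ioo, sub_self] at hy
    exact ⟨hy.2.1, hS.subset_Iic hy.1⟩
  have h1 := measureReal_mono (μ := volume) hlower
    (measure_inter_lt_top_of_right_ne_top measure_ball_lt_top.ne).ne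
  have h2 := measureReal_mono (μ := volume) hupper measure_Ioc_lt_top.ne
  rw [Real.volume_real_Ioo_of_le (by norm_num)] at h1
  rw [Real.volume_real_Ioc_of_le (by norm_num)] at h2
  rw [densityRatio]
  constructor <;> linarith

lemma not_hasDensity_one (hS : IsTransition S) : ¬ ∃ v, HasDensity S 1 v := by
  rintro ⟨v, hv⟩
  have hfixed (n : ℕ) : zigzag^[n] 1 = 1 := Function.iterate_fixed zigzag_one n
  have hlim := hS.tendsto_densityRatio_zigzag_iterate (r := 1)
    (fun n => by simp [hfixed]) hv one_pos le_rfl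
  simp only [hfixed] at hlim
  have hv_eq : densityRatio S 1 1 = v := tendsto_nhds_unique tendsto_const_nhds hlim
  obtain ⟨hlower, hupper⟩ := hv_eq ▸ hS.densityRatio_one_one_mem_Icc
  exact hS.noIntermediateDensityAt 1 v (by linarith) (by linarith) hv

end IsTransition

section Block

variable {S : Set ℝ} {a c w v x : ℝ}

/-- The decreasing affine map sending `a` to `1` and `a + w` to `0`, which places a reversed copy of
a transition between `a` and `a + w`. -/
noncomputable def ramp (a w x : ℝ) : ℝ := 1 - (x - a) / w

lemma continuous_ramp (a w : ℝ) : Continuous (ramp a w) := by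
  unfold ramp
  fun_prop

lemma ramp_left (a w : ℝ) : ramp a w a = 1 := by simp [ramp]

lemma ramp_nonneg_iff (hw : 0 < w) : 0 ≤ ramp a w x ↔ x ≤ a + w := by
  rw [ramp, sub_nonneg, div_le_one hw, sub_le_iff_le_add']

lemma ramp_le_one_iff (hw : 0 < w) : ramp a w x ≤ 1 ↔ a ≤ x := by
  rw [ramp, sub_le_self_iff, le_div_iff₀ hw, zero_mul, sub_nonneg]

lemma ramp_eq_add_mul_sub (a w x y : ℝ) : ramp a w y = ramp a w x + -w⁻¹ * (y - x) := by
  rw [ramp, ramp, div_eq_inv_mul, div_eq_inv_mul]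
  ring

lemma hasDensity_preimage_ramp_iff (hw : w ≠ 0) :
    HasDensity (ramp a w ⁻¹' S) x v ↔ HasDensity S (ramp a w x) v :=
  hasDensity_preimage_iff_of_affine (neg_ne_zero.2 (inv_ne_zero hw))
    (.of_forall (ramp_eq_add_mul_sub a w x))

lemma volume_preimage_ramp (hw : 0 < w) :
    volume (ramp a w ⁻¹' S) = ENNReal.ofReal w * volume S := by
  have h : ramp a w = fun y => -w⁻¹ * y + (1 + w⁻¹ * a) := by
    ext y
    rw [ramp, div_eq_inv_mul]
    ring
  rw [h, volume_affine_preimage (neg_ne_zero.2 (inv_ne_zero hw.ne')), inv_neg, inv_inv, abs_neg,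
    abs_of_pos hw]

namespace IsTransition

lemma preimage_ramp_subset_Ici (hS : IsTransition S) (hw : 0 < w) : ramp a w ⁻¹' S ⊆ Ici a :=
  fun _ hx => (ramp_le_one_iff hw).1 (hS.subset_Iic hx)

lemma Ioi_subset_preimage_ramp (hS : IsTransition S) (hw : 0 < w) : Ioi (a + w) ⊆ ramp a w ⁻¹' S :=
  fun _ hx => hS.Iio_subset (not_le.1 fun h => hx.not_ge ((ramp_nonneg_iff hw).1 h))

lemma noIntermediateDensityAt_preimage_ramp (hS : IsTransition S) (hw : w ≠ 0) (x : ℝ) :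
    NoIntermediateDensityAt (ramp a w ⁻¹' S) x := fun v hv0 hv1 hv =>
  hS.noIntermediateDensityAt _ v hv0 hv1 ((hasDensity_preimage_ramp_iff hw).1 hv)

lemma inter_Ici_subset_Icc (hS : IsTransition S) : S ∩ Ici 0 ⊆ Icc 0 1 :=
  fun _ hx => ⟨hx.2, hS.subset_Iic hx.1⟩

lemma measureReal_inter_Ici_le_one (hS : IsTransition S) : volume.real (S ∩ Ici 0) ≤ 1 := by
  simpa using measureReal_mono (μ := volume) hS.inter_Ici_subset_Icc measure_Icc_lt_top.ne

lemma volume_preimage_ramp_inter_Iic (hS : IsTransition S) (hw : 0 < w) (hc : a + w ≤ c) :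
    volume (ramp a w ⁻¹' S ∩ Iic c) =
      ENNReal.ofReal (w * volume.real (S ∩ Ici 0) + (c - (a + w))) := by
  have hsplit : ramp a w ⁻¹' S ∩ Iic c = ramp a w ⁻¹' (S ∩ Ici 0) ∪ Ioc (a + w) c := by
    ext x
    have h0 : 0 ≤ ramp a w x ↔ x ≤ a + w := ramp_nonneg_iff hw
    have hS' : a + w < x → ramp a w x ∈ S := fun hx => hS.Ioi_subset_preimage_ramp hw hx
    simp only [mem_inter_iff, mem_preimage, mem_Iic, mem_union, mem_Ici, mem_Ioc, h0]
    grind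
  have hdisj : Disjoint (ramp a w ⁻¹' (S ∩ Ici 0)) (Ioc (a + w) c) :=
    disjoint_left.2 fun x hx hx' => hx'.1.not_ge ((ramp_nonneg_iff hw).1 hx.2)
  have hfinite : volume (S ∩ Ici 0) ≠ ⊤ :=
    measure_ne_top_of_subset hS.inter_Ici_subset_Icc measure_Icc_lt_top.ne
  rw [hsplit, measure_union hdisj measurableSet_Ioc, volume_preimage_ramp hw, Real.volume_Ioc,
    ENNReal.ofReal_add (by positivity) (by linarith), ENNReal.ofReal_mul hw.le,
    ofReal_measureReal hfinite]

lemma noIntermediateDensityAt_preimage_fold_ramp (hS : IsTransition S) (hw : 0 < w)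
    (hc : a + w < c) (x : ℝ) : NoIntermediateDensityAt (fold c ⁻¹' (ramp a w ⁻¹' S)) x := by
  have hfull : c ∈ interior (ramp a w ⁻¹' S) :=
    interior_mono (hS.Ioi_subset_preimage_ramp hw) (isOpen_Ioi.interior_eq.ge hc)
  exact noIntermediateDensityAt_preimage_fold (hS.noIntermediateDensityAt_preimage_ramp hw.ne')
    (fun h => h.2 hfull) x

lemma not_hasDensity_preimage_fold_ramp (hS : IsTransition S) (hw : w ≠ 0) (hc : a < c) :
    ¬ ∃ v, HasDensity (fold c ⁻¹' (ramp a w ⁻¹' S)) a v := by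
  simp only [hasDensity_preimage_fold_iff hc.ne, fold_of_le hc.le, hasDensity_preimage_ramp_iff hw,
    ramp_left]
  exact hS.not_hasDensity_one

lemma exists_continuous_preimage_isSpongy (hS : IsTransition S) (hSm : MeasurableSet S) (a : ℝ)
    {μ ℓ : ℝ} (hμ : 0 < μ) (hμℓ : μ < ℓ) :
    ∃ f : ℝ → ℝ, Continuous f ∧ f ⁻¹' S ⊆ Icc a (a + ℓ) ∧ IsSpongy (f ⁻¹' S) ∧
      (¬ ∃ v, HasDensity (f ⁻¹' S) a v) ∧ volume (f ⁻¹' S) = ENNReal.ofReal μ := by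
  obtain ⟨w, hw, hw_lt⟩ : ∃ w, 0 < w ∧ w < min (μ / 2) ((ℓ - μ) / 2) :=
    exists_between (lt_min (by linarith) (by linarith))
  obtain ⟨hwμ, hwℓ⟩ := lt_min_iff.1 hw_lt
  set p := volume.real (S ∩ Ici 0)
  have hp0 : 0 ≤ w * p := mul_nonneg hw.le measureReal_nonneg
  have hp1 : w * p ≤ w := mul_le_of_le_one_right hw.le hS.measureReal_inter_Ici_le_one
  -- The fold at `c` doubles what lies before it, which is the ramp of measure `w * p` and the
  -- interval from `a + w` to `c`.
  obtain ⟨c, hc⟩ : ∃ c, c = a + w + (μ / 2 - w * p) := ⟨_, rfl⟩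
  have hnot := hS.not_hasDensity_preimage_fold_ramp (a := a) (c := c) hw.ne' (by linarith)
  refine ⟨ramp a w ∘ fold c, (continuous_ramp a w).comp (continuous_fold c), ?_⟩
  rw [preimage_comp]
  refine ⟨?_, ⟨hS.noIntermediateDensityAt_preimage_fold_ramp hw (by linarith), a, hnot⟩, hnot, ?_⟩
  · exact (preimage_fold_subset_Icc (hS.preimage_ramp_subset_Ici hw)).trans
      (Icc_subset_Icc_right (by linarith))
  · rw [volume_preimage_fold ((continuous_ramp a w).measurable hSm),
      hS.volume_preimage_ramp_inter_Iic hw (by linarith), ← ENNReal.ofReal_ofNat 2,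
      ← ENNReal.ofReal_mul zero_le_two, hc]
    congr 1
    ring

end IsTransition

end Block

section ShrinkingUnion

variable {b : ℕ → Set ℝ} {l u : ℕ → ℝ} {x : ℝ}

lemma exists_eventually_mem_iUnion_iff (hb : ∀ n, b n ⊆ Icc (l n) (u n)) (hu : Antitone u)
    (hsep : ∀ n, u (n + 1) < l n) (hlim : Tendsto u atTop (𝓝 0)) (hx : 0 < x) :
    ∃ n, ∀ᶠ y in 𝓝 x, y ∈ ⋃ n, b n ↔ y ∈ b n := by
  classical
  have hex : ∃ n, u (n + 1) < x :=
    (((tendsto_add_atTop_iff_nat 1).2 hlim).eventually_lt_const hx).exists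
  have hbelow : ∀ᶠ y in 𝓝 x, ∀ k < Nat.find hex, y < l k :=
    (eventually_all_finite (finite_lt_nat (Nat.find hex))).2 fun k hk =>
      eventually_lt_nhds ((not_lt.1 (Nat.find_min hex hk)).trans_lt (hsep k))
  refine ⟨Nat.find hex, ?_⟩
  filter_upwards [eventually_gt_nhds (Nat.find_spec hex), hbelow] with y hgt hlt
  refine ⟨fun hy => ?_, fun hy => mem_iUnion_of_mem _ hy⟩
  obtain ⟨k, hk⟩ := mem_iUnion.1 hy
  rcases lt_trichotomy k (Nat.find hex) with h | rfl | h
  · exact absurd (hb k hk).1 (hlt k h).not_ge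
  · exact hk
  · exact absurd ((hb k hk).2.trans (hu h)) hgt.not_ge

lemma volume_iUnion_inter_ball_le (hl : ∀ n, 0 ≤ l n) (hb : ∀ n, b n ⊆ Ici (l n))
    (hvol : ∀ n, volume (b n) ≤ ENNReal.ofReal (l n ^ 2 / 2 / 2 ^ n)) (r : ℝ) :
    volume ((⋃ n, b n) ∩ ball 0 r) ≤ ENNReal.ofReal (r ^ 2) := by
  have hterm (n : ℕ) : volume (b n ∩ ball 0 r) ≤ ENNReal.ofReal (r ^ 2 / 2 / 2 ^ n) := by
    rcases lt_or_ge (l n) r with h | h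
    · have hsq : l n ^ 2 ≤ r ^ 2 := pow_le_pow_left₀ (hl n) h.le 2
      exact (measure_mono inter_subset_left).trans ((hvol n).trans (by gcongr))
    · have hempty : b n ∩ ball 0 r = ∅ := by
        refine eq_empty_of_forall_notMem fun y hy => ?_
        have hy_lt : |y| < r := by simpa using hy.2
        linarith [mem_Ici.1 (hb n hy.1), le_abs_self y]
      rw [hempty, measure_empty]
      exact zero_le
  calc volume ((⋃ n, b n) ∩ ball 0 r)
      ≤ ∑' n, volume (b n ∩ ball 0 r) := by
        rw [iUnion_inter]
        exact measure_iUnion_le _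
    _ ≤ ∑' n, ENNReal.ofReal (r ^ 2 / 2 / 2 ^ n) := ENNReal.tsum_le_tsum hterm
    _ = ENNReal.ofReal (r ^ 2) := by
        rw [← ENNReal.ofReal_tsum_of_nonneg (fun n => by positivity) (summable_geometric_two' _),
          tsum_geometric_two']

lemma noIntermediateDensityAt_iUnion (hb : ∀ n, b n ⊆ Icc (l n) (u n)) (hl : ∀ n, 0 ≤ l n)
    (hu : Antitone u) (hsep : ∀ n, u (n + 1) < l n) (hlim : Tendsto u atTop (𝓝 0))
    (hbn : ∀ n x, NoIntermediateDensityAt (b n) x) (h0 : HasDensity (⋃ n, b n) 0 0) (x : ℝ) :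
    NoIntermediateDensityAt (⋃ n, b n) x := by
  rcases lt_trichotomy x 0 with hx | rfl | hx
  · have hclosure : closure (⋃ n, b n) ⊆ Ici 0 :=
      closure_minimal (iUnion_subset fun n _ hy => (hl n).trans (hb n hy).1) isClosed_Ici
    exact noIntermediateDensityAt_of_notMem_frontier fun h => hx.not_ge (hclosure h.1)
  · exact h0.noIntermediateDensityAt (.inl rfl)
  · obtain ⟨n, hn⟩ := exists_eventually_mem_iUnion_iff hb hu hsep hlim hx
    exact (noIntermediateDensityAt_congr hn).2 (hbn n x)

lemma zero_mem_closure_iUnion (hb : ∀ n, b n ⊆ Icc (l n) (u n)) (hl : ∀ n, 0 ≤ l n)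
    (hlim : Tendsto u atTop (𝓝 0)) (hne : ∀ n, (b n).Nonempty) : 0 ∈ closure (⋃ n, b n) := by
  choose y hy using hne
  have hy_lim : Tendsto y atTop (𝓝 0) :=
    squeeze_zero (fun n => (hl n).trans (hb n (hy n)).1) (fun n => (hb n (hy n)).2) hlim
  exact mem_closure_of_tendsto hy_lim (.of_forall fun n => mem_iUnion_of_mem n (hy n))

end ShrinkingUnion

lemma exists_isOpen_isSpongy_subset_Icc {a ε : ℝ} (ha : 0 < a) (hε : 0 < ε) :
    ∃ V : Set ℝ, IsOpen V ∧ V ⊆ Icc a (3 / 2 * a) ∧ IsSpongy V ∧ V.Nonempty ∧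
      volume V ≤ ENNReal.ofReal ε := by
  obtain ⟨μ, hμ, hμ_lt⟩ : ∃ μ, 0 < μ ∧ μ < min ε (a / 2) :=
    exists_between (lt_min hε (by linarith))
  obtain ⟨hμε, hμa⟩ := lt_min_iff.1 hμ_lt
  obtain ⟨f, hf, hsub, hspongy, -, hvol⟩ :=
    isTransition_openTransition.exists_continuous_preimage_isSpongy
      isOpen_openTransition.measurableSet a hμ hμa
  refine ⟨f ⁻¹' openTransition, isOpen_openTransition.preimage hf, ?_, hspongy, ?_, ?_⟩
  · exact hsub.trans (Icc_subset_Icc_right (by linarith))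
  · exact nonempty_of_measure_ne_zero (hvol.trans_ne (ENNReal.ofReal_pos.2 hμ).ne')
  · exact hvol.trans_le (ENNReal.ofReal_le_ofReal hμε.le)

lemma exists_isOpen_hasDensity_zero {δ : ℝ} (hδ : 0 < δ) :
    ∃ U : Set ℝ, IsOpen U ∧ U ⊆ Icc 0 δ ∧ (∀ x, NoIntermediateDensityAt U x) ∧
      0 ∈ closure U ∧ HasDensity U 0 0 := by
  set l : ℕ → ℝ := fun n => δ / 2 * (1 / 2) ^ n with hl_def
  have hl_pos (n : ℕ) : 0 < l n := by positivity
  have hl_anti : Antitone l := fun m n hmn =>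
    mul_le_mul_of_nonneg_left (pow_le_pow_of_le_one (by norm_num) (by norm_num) hmn)
      (by positivity)
  have hl_succ (n : ℕ) : l (n + 1) = l n / 2 := by
    simp only [hl_def, pow_succ]
    ring
  have hl_lim : Tendsto l atTop (𝓝 0) := by
    simpa only [mul_zero] using (tendsto_pow_atTop_nhds_zero_of_lt_one (by norm_num)
      (by norm_num : (1 / 2 : ℝ) < 1)).const_mul (δ / 2)
  have hu_lim : Tendsto (fun n => 3 / 2 * l n) atTop (𝓝 0) := by
    simpa only [mul_zero] using hl_lim.const_mul (3 / 2)
  choose b hbo hb hb_spongy hb_ne hb_vol using fun n =>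
    exists_isOpen_isSpongy_subset_Icc (hl_pos n)
      (show 0 < l n ^ 2 / 2 / 2 ^ n by have := hl_pos n; positivity)
  have hdens : HasDensity (⋃ n, b n) 0 0 :=
    hasDensity_zero_of_volume_inter_ball_le fun r _ => volume_iUnion_inter_ball_le
      (fun n => (hl_pos n).le) (fun n => (hb n).trans Icc_subset_Ici_self) hb_vol r
  refine ⟨⋃ n, b n, isOpen_iUnion hbo, iUnion_subset fun n => (hb n).trans ?_, ?_, ?_, hdens⟩
  · have hl_zero : l 0 = δ / 2 := by simp [hl_def]
    have hl_le : l n ≤ l 0 := hl_anti (Nat.zero_le n)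
    exact Icc_subset_Icc (hl_pos n).le (by linarith)
  · refine noIntermediateDensityAt_iUnion hb (fun n => (hl_pos n).le)
      (hl_anti.const_mul (by norm_num)) (fun n => ?_) hu_lim (fun n => (hb_spongy n).1) hdens
    linarith [hl_succ n, hl_pos n]
  · exact zero_mem_closure_iUnion hb (fun n => (hl_pos n).le) hu_lim hb_ne

section HalfSponge

variable {A S U : Set ℝ} {m v : ℝ}

lemma hasDensity_preimage_fold_zero_iff :
    HasDensity (fold (1 / 2) ⁻¹' A) 0 v ↔ HasDensity A 0 v := by
  rw [hasDensity_preimage_fold_iff (by norm_num), fold_of_le (by norm_num)]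

lemma hasDensity_preimage_fold_one_iff :
    HasDensity (fold (1 / 2) ⁻¹' A) 1 v ↔ HasDensity A 0 v := by
  rw [hasDensity_preimage_fold_iff (by norm_num), fold_of_ge (by norm_num)]
  norm_num

/-- A spongy set of measure `m / 2` accumulating at `0` and staying away from `1 / 2`: the left half
of a spongy subset of `[0, 1]` which is symmetric about `1 / 2`. -/
structure IsHalfSponge (m : ℝ) (A : Set ℝ) : Prop where
  exists_subset_Icc : ∃ c < 1 / 2, A ⊆ Icc 0 c
  measurableSet : MeasurableSet A
  isSpongy : IsSpongy A
  zero_mem_closure : 0 ∈ closure A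
  volume_eq : volume A = ENNReal.ofReal (m / 2)

namespace IsHalfSponge

lemma lt_half_of_mem_closure (hA : IsHalfSponge m A) {x : ℝ} (hx : x ∈ closure A) : x < 1 / 2 := by
  obtain ⟨c, hc, hsub⟩ := hA.exists_subset_Icc
  exact (closure_minimal hsub isClosed_Icc hx).2.trans_lt hc

lemma isSpongy_preimage_fold (hA : IsHalfSponge m A) : IsSpongy (fold (1 / 2) ⁻¹' A) := by
  obtain ⟨x, hx⟩ := hA.isSpongy.2
  have hx_lt := hA.lt_half_of_mem_closure (mem_closure_of_not_hasDensity hx)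
  refine ⟨noIntermediateDensityAt_preimage_fold hA.isSpongy.1
    fun h => (hA.lt_half_of_mem_closure h.1).false, x, ?_⟩
  simpa only [hasDensity_preimage_fold_iff hx_lt.ne, fold_of_le hx_lt.le] using hx

lemma volume_preimage_fold (hA : IsHalfSponge m A) :
    volume (fold (1 / 2) ⁻¹' A) = ENNReal.ofReal m := by
  have hsub : A ⊆ Iic (1 / 2) := fun x hx => (hA.lt_half_of_mem_closure (subset_closure hx)).le
  rw [_root_.volume_preimage_fold hA.measurableSet, inter_eq_left.2 hsub, hA.volume_eq,
    ← ENNReal.ofReal_ofNat 2, ← ENNReal.ofReal_mul zero_le_two, mul_div_cancel₀ _ two_ne_zero]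

lemma preimage_fold_subset_Icc (hA : IsHalfSponge m A) : fold (1 / 2) ⁻¹' A ⊆ Icc 0 1 := by
  obtain ⟨c, -, hsub⟩ := hA.exists_subset_Icc
  convert _root_.preimage_fold_subset_Icc (c := 1 / 2) (hsub.trans Icc_subset_Ici_self) using 2
  norm_num

lemma zero_mem_closure_preimage_fold (hA : IsHalfSponge m A) :
    0 ∈ closure (fold (1 / 2) ⁻¹' A) := by
  refine closure_mono (fun x hx => ?_) hA.zero_mem_closure
  rwa [mem_preimage, fold_of_le (hA.lt_half_of_mem_closure (subset_closure hx)).le]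

lemma one_mem_closure_preimage_fold (hA : IsHalfSponge m A) :
    1 ∈ closure (fold (1 / 2) ⁻¹' A) := by
  have h := map_mem_closure (f := fun x : ℝ => 2 * (1 / 2) - x) (by fun_prop)
    hA.zero_mem_closure_preimage_fold (t := fold (1 / 2) ⁻¹' A)
    fun x hx => by rwa [mem_preimage, fold_reflect]
  norm_num at h
  exact h

lemma goodSpongy_preimage_fold (hA : IsHalfSponge m A) : GoodSpongy m (fold (1 / 2) ⁻¹' A) := by
  have h0 := hA.zero_mem_closure_preimage_fold
  have h1 := hA.one_mem_closure_preimage_fold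
  have hne := closure_nonempty_iff.1 ⟨0, h0⟩
  have hsub := hA.preimage_fold_subset_Icc
  exact ⟨hsub, hA.measurableSet.preimage (continuous_fold _).measurable, hA.isSpongy_preimage_fold,
    (isGLB_of_mem_closure (fun _ hx => (hsub hx).1) h0).csInf_eq hne,
    (isLUB_of_mem_closure (fun _ hx => (hsub hx).2) h1).csSup_eq hne, hA.volume_preimage_fold⟩

end IsHalfSponge

lemma IsTransition.exists_isHalfSponge_not_hasDensity (hS : IsTransition S) (hSm : MeasurableSet S)
    (hm0 : 0 < m) (hm1 : m < 1) :
    ∃ f : ℝ → ℝ, Continuous f ∧ IsHalfSponge m (f ⁻¹' S) ∧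
      ¬ ∃ v, HasDensity (f ⁻¹' S) 0 v := by
  obtain ⟨ℓ, hmℓ, hℓ⟩ : ∃ ℓ, m / 2 < ℓ ∧ ℓ < 1 / 2 := exists_between (by linarith)
  obtain ⟨f, hf, hsub, hspongy, hnot, hvol⟩ :=
    hS.exists_continuous_preimage_isSpongy hSm 0 (half_pos hm0) hmℓ
  rw [zero_add] at hsub
  exact ⟨f, hf, ⟨⟨ℓ, hℓ, hsub⟩, hf.measurable hSm, hspongy, mem_closure_of_not_hasDensity hnot,
    hvol⟩, hnot⟩

lemma IsTransition.exists_isHalfSponge_union (hS : IsTransition S) (hSm : MeasurableSet S) {δ : ℝ}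
    (hδm : δ < m / 2) (hδ : δ + m / 2 < 1 / 2) (hUm : MeasurableSet U) (hUδ : U ⊆ Icc 0 δ)
    (hU : ∀ x, NoIntermediateDensityAt U x) (hU_closure : 0 ∈ closure U)
    (hU_dens : HasDensity U 0 v) :
    ∃ f : ℝ → ℝ, Continuous f ∧ IsHalfSponge m (U ∪ f ⁻¹' S) ∧ HasDensity (U ∪ f ⁻¹' S) 0 v := by
  have hδ0 : 0 ≤ δ := nonempty_Icc.1 ((closure_nonempty_iff.1 ⟨0, hU_closure⟩).mono hUδ)
  have hUvol : volume.real U ≤ δ := by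
    simpa [hδ0] using measureReal_mono (μ := volume) hUδ measure_Icc_lt_top.ne
  obtain ⟨a, hδa, ha⟩ : ∃ a, δ < a ∧ a + m / 2 < 1 / 2 := by
    obtain ⟨a, h1, h2⟩ := exists_between (lt_sub_iff_add_lt.2 hδ)
    exact ⟨a, h1, lt_sub_iff_add_lt.1 h2⟩
  obtain ⟨ℓ, hℓ, ha_add⟩ : ∃ ℓ, m / 2 < ℓ ∧ ℓ < 1 / 2 - a := exists_between (by linarith)
  obtain ⟨f, hf, hsub, hspongy, hnot, hvol⟩ := hS.exists_continuous_preimage_isSpongy hSm a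
    (sub_pos.2 (hUvol.trans_lt hδm)) ((sub_le_self _ measureReal_nonneg).trans_lt hℓ)
  have hclosure : Disjoint (closure U) (closure (f ⁻¹' S)) :=
    disjoint_left.2 fun x hx hx' => ((closure_minimal hUδ isClosed_Icc hx).2.trans_lt hδa).not_ge
      (closure_minimal hsub isClosed_Icc hx').1
  refine ⟨f, hf, ⟨⟨a + ℓ, by linarith, ?_⟩, hUm.union (hf.measurable hSm), ⟨fun x => ?_, a, ?_⟩,
    closure_mono subset_union_left hU_closure, ?_⟩, ?_⟩
  · exact union_subset (hUδ.trans (Icc_subset_Icc_right (by linarith)))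
      (hsub.trans (Icc_subset_Icc_left (by linarith)))
  · exact noIntermediateDensityAt_union (hU x) (hspongy.1 x) hclosure
  · have ha_mem := mem_closure_of_not_hasDensity hnot
    simpa only [hasDensity_congr (eventually_mem_union_iff_right
      (disjoint_right.1 hclosure ha_mem))] using hnot
  · rw [measure_union (hclosure.mono subset_closure subset_closure) (hf.measurable hSm), hvol,
      ← ofReal_measureReal (measure_ne_top_of_subset hUδ measure_Icc_lt_top.ne),
      ← ENNReal.ofReal_add measureReal_nonneg (by linarith), add_sub_cancel]
  · exact (hasDensity_congr (eventually_mem_union_iff_left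
      (disjoint_left.1 hclosure hU_closure))).2 hU_dens

lemma exists_isOpen_isHalfSponge_not_hasDensity (hm0 : 0 < m) (hm1 : m < 1) :
    ∃ A, IsOpen A ∧ IsHalfSponge m A ∧ ¬ ∃ v, HasDensity A 0 v :=
  let ⟨_, hf, hA⟩ := isTransition_openTransition.exists_isHalfSponge_not_hasDensity
    isOpen_openTransition.measurableSet hm0 hm1
  ⟨_, isOpen_openTransition.preimage hf, hA⟩

lemma exists_isClosed_isHalfSponge_not_hasDensity (hm0 : 0 < m) (hm1 : m < 1) :
    ∃ A, IsClosed A ∧ IsHalfSponge m A ∧ ¬ ∃ v, HasDensity A 0 v :=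
  let ⟨_, hf, hA⟩ := isTransition_closedTransition.exists_isHalfSponge_not_hasDensity
    isClosed_closedTransition.measurableSet hm0 hm1
  ⟨_, isClosed_closedTransition.preimage hf, hA⟩

lemma exists_isOpen_isHalfSponge_hasDensity_zero (hm0 : 0 < m) (hm1 : m < 1) :
    ∃ A, IsOpen A ∧ IsHalfSponge m A ∧ HasDensity A 0 0 := by
  obtain ⟨δ, hδ0, hδ⟩ : ∃ δ, 0 < δ ∧ δ < min (m / 2) (1 / 2 - m / 2) :=
    exists_between (lt_min (by linarith) (by linarith))
  rw [lt_min_iff, lt_sub_iff_add_lt] at hδ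
  obtain ⟨U, hUo, hUδ, hU, hU_closure, hU_dens⟩ := exists_isOpen_hasDensity_zero hδ0
  obtain ⟨f, hf, hA⟩ := isTransition_openTransition.exists_isHalfSponge_union
    isOpen_openTransition.measurableSet hδ.1 hδ.2 hUo.measurableSet hUδ hU hU_closure hU_dens
  exact ⟨_, hUo.union (isOpen_openTransition.preimage hf), hA⟩

lemma exists_isClosed_isHalfSponge_hasDensity_zero (hm0 : 0 < m) (hm1 : m < 1) :
    ∃ A, IsClosed A ∧ IsHalfSponge m A ∧ HasDensity A 0 0 := by
  have hdens (x : ℝ) : HasDensity {0} x 0 :=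
    hasDensity_zero_of_volume_eq_zero Real.volume_singleton x
  obtain ⟨f, hf, hA⟩ := isTransition_closedTransition.exists_isHalfSponge_union
    isClosed_closedTransition.measurableSet (half_pos hm0) (by linarith)
    (measurableSet_singleton 0) (Icc_self 0).ge
    (fun x => (hdens x).noIntermediateDensityAt (.inl rfl)) (subset_closure rfl) (hdens 0)
  exact ⟨_, isClosed_singleton.union (isClosed_closedTransition.preimage hf), hA⟩

end HalfSponge

/-- **Spongy subsets of `[0,1]` of any prescribed measure.** For every `m ∈ (0,1)` there is
a spongy `X ⊆ [0,1]` with `inf X = 0`, `sup X = 1` and `λ(X) = m`; it can be taken open or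
closed, and moreover either so that the density of `X` fails to exist at both `0` and `1`,
or so that the density of `X` exists at both `0` and `1`. -/
theorem stmt_15 (m : ℝ) (hm0 : 0 < m) (hm1 : m < 1) :
    (∃ X : Set ℝ, IsOpen X ∧ GoodSpongy m X ∧
      (¬ ∃ v : ℝ, HasDensity X 0 v) ∧ (¬ ∃ v : ℝ, HasDensity X 1 v)) ∧
    (∃ X : Set ℝ, IsClosed X ∧ GoodSpongy m X ∧
      (¬ ∃ v : ℝ, HasDensity X 0 v) ∧ (¬ ∃ v : ℝ, HasDensity X 1 v)) ∧
    (∃ X : Set ℝ, IsOpen X ∧ GoodSpongy m X ∧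
      (∃ v : ℝ, HasDensity X 0 v) ∧ (∃ v : ℝ, HasDensity X 1 v)) ∧
    (∃ X : Set ℝ, IsClosed X ∧ GoodSpongy m X ∧
      (∃ v : ℝ, HasDensity X 0 v) ∧ (∃ v : ℝ, HasDensity X 1 v)) := by
  obtain ⟨A, hA_open, hA, hA_dens⟩ := exists_isOpen_isHalfSponge_not_hasDensity hm0 hm1
  obtain ⟨B, hB_closed, hB, hB_dens⟩ := exists_isClosed_isHalfSponge_not_hasDensity hm0 hm1
  obtain ⟨C, hC_open, hC, hC_dens⟩ := exists_isOpen_isHalfSponge_hasDensity_zero hm0 hm1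
  obtain ⟨D, hD_closed, hD, hD_dens⟩ := exists_isClosed_isHalfSponge_hasDensity_zero hm0 hm1
  have hfold := continuous_fold (1 / 2)
  refine ⟨⟨_, hA_open.preimage hfold, hA.goodSpongy_preimage_fold, ?_⟩,
    ⟨_, hB_closed.preimage hfold, hB.goodSpongy_preimage_fold, ?_⟩,
    ⟨_, hC_open.preimage hfold, hC.goodSpongy_preimage_fold, ?_⟩,
    ⟨_, hD_closed.preimage hfold, hD.goodSpongy_preimage_fold, ?_⟩⟩
  all_goals simp only [hasDensity_preimage_fold_zero_iff, hasDensity_preimage_fold_one_iff]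
  exacts [⟨hA_dens, hA_dens⟩, ⟨hB_dens, hB_dens⟩, ⟨⟨0, hC_dens⟩, 0, hC_dens⟩,
    ⟨⟨0, hD_dens⟩, 0, hD_dens⟩]
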